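/- Let p ∈ Δ*_m, q ∈ Δ*_n, c ∈ ℝ^{m×n}, and let α > 0, β > 0. Let π^reg be the unique minimizer over Γ(*,q) of F^reg(π) = ⟨c,π⟩ + (1/α) KL(π𝟙|p) + (1/β) KL(π|π^ref). Then ‖π^reg𝟙 − p‖₁ ≤ (2αβ/(α+β)) · (4‖log p‖_∞/β + ‖c‖_osc). -/

import Mathlib

open Finset Filter Topology ENNReal

noncomputable section

/-- Frobenius inner product `⟨c, π⟩ = ∑_{ij} c_ij π_ij`. -/
def frob {m n : ℕ} (c π : Matrix (Fin m) (Fin n) ℝ) : ℝ := ∑ i, ∑ j, c i j * π i j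

/-- Row sums `π𝟙`. -/
def rowSum {m n : ℕ} (π : Matrix (Fin m) (Fin n) ℝ) : Fin m → ℝ := fun i => ∑ j, π i j

/-- Column sums `πᵀ𝟙`. -/
def colSum {m n : ℕ} (π : Matrix (Fin m) (Fin n) ℝ) : Fin n → ℝ := fun j => ∑ i, π i j

/-- Kullback–Leibler divergence between nonnegative vectors. -/
def KLvec {k : ℕ} (a b : Fin k → ℝ) : ℝ := ∑ i, (a i * Real.log (a i / b i) - a i + b i)

/-- Kullback–Leibler divergence between nonnegative matrices. -/
def KLmat {m n : ℕ} (a b : Matrix (Fin m) (Fin n) ℝ) : ℝ :=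
  ∑ i, ∑ j, (a i j * Real.log (a i j / b i j) - a i j + b i j)

/-- The tipless simplex `Δ*_k`: strictly positive entries summing to 1. -/
def simplexPos (k : ℕ) : Set (Fin k → ℝ) := {p | (∀ i, 0 < p i) ∧ ∑ i, p i = 1}

/-- The simplex `Δ_k`: nonnegative entries summing to 1. -/
def simplexNN (k : ℕ) : Set (Fin k → ℝ) := {p | (∀ i, 0 ≤ p i) ∧ ∑ i, p i = 1}

/-- Transport plans `Γ(p, q)`. -/
def Gamma {m n : ℕ} (p : Fin m → ℝ) (q : Fin n → ℝ) : Set (Matrix (Fin m) (Fin n) ℝ) :=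
  {π | (∀ i j, 0 ≤ π i j) ∧ rowSum π = p ∧ colSum π = q}

/-- Half-relaxed plans `Γ(*, q)`. -/
def GammaStar {m n : ℕ} (q : Fin n → ℝ) : Set (Matrix (Fin m) (Fin n) ℝ) :=
  {π | (∀ i j, 0 ≤ π i j) ∧ colSum π = q}

/-- Reference plan `π^ref = (mn)⁻¹ 𝟙𝟙ᵀ`. -/
def piRef (m n : ℕ) : Matrix (Fin m) (Fin n) ℝ := fun _ _ => 1 / (m * n)

/-- Optimal transport value `OT(p,q)`. -/
def OTval {m n : ℕ} (c : Matrix (Fin m) (Fin n) ℝ) (p : Fin m → ℝ) (q : Fin n → ℝ) : ℝ :=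
  ⨅ π : Gamma p q, frob c π.1

/-- Entropic OT objective `⟨c,π⟩ + β⁻¹ KL(π|π^ref)`. -/
def eotObj {m n : ℕ} (c : Matrix (Fin m) (Fin n) ℝ) (β : ℝ) (π : Matrix (Fin m) (Fin n) ℝ) : ℝ :=
  frob c π + β⁻¹ * KLmat π (piRef m n)

/-- Entropic OT value `EOT_β(p,q)`. -/
def eotVal {m n : ℕ} (c : Matrix (Fin m) (Fin n) ℝ) (β : ℝ) (p : Fin m → ℝ) (q : Fin n → ℝ) : ℝ :=
  ⨅ π : Gamma p q, eotObj c β π.1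

/-- Gibbs kernel `K = e^{-βc}` (entrywise). -/
def gibbs {m n : ℕ} (c : Matrix (Fin m) (Fin n) ℝ) (β : ℝ) : Matrix (Fin m) (Fin n) ℝ :=
  fun i j => Real.exp (-(β * c i j))

/-- Annealed Sinkhorn scaling vectors `(a_t, b_t)`:
`b_0 = 𝟙`, `a_{t+1} = p ⊘ (K_t b_t)`, `b_{t+1} = q ⊘ (K_{t+1}ᵀ a_{t+1})`, `K_t = e^{-β_t c}`. -/
def sinkAB {m n : ℕ} (p : Fin m → ℝ) (q : Fin n → ℝ) (c : Matrix (Fin m) (Fin n) ℝ)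
    (β : ℕ → ℝ) : ℕ → (Fin m → ℝ) × (Fin n → ℝ)
  | 0 => (fun _ => 1, fun _ => 1)
  | t + 1 =>
    let prev := sinkAB p q c β t
    let a : Fin m → ℝ := fun i => p i / ∑ j, gibbs c (β t) i j * prev.2 j
    (a, fun j => q j / ∑ i, gibbs c (β (t + 1)) i j * a i)

/-- Annealed Sinkhorn primal iterate `π_t = diag(a_t) K_t diag(b_t)`. -/
def sinkPlan {m n : ℕ} (p : Fin m → ℝ) (q : Fin n → ℝ) (c : Matrix (Fin m) (Fin n) ℝ)
    (β : ℕ → ℝ) (t : ℕ) : Matrix (Fin m) (Fin n) ℝ :=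
  fun i j => (sinkAB p q c β t).1 i * gibbs c (β t) i j * (sinkAB p q c β t).2 j

/-- `ℓ¹` norm of a vector. -/
def l1vec {k : ℕ} (a : Fin k → ℝ) : ℝ := ∑ i, |a i|

/-- Oscillation semi-norm `‖c‖_osc = max c - min c`. -/
def cOsc {m n : ℕ} (c : Matrix (Fin m) (Fin n) ℝ) : ℝ :=
  (⨆ i, ⨆ j, c i j) - ⨅ i, ⨅ j, c i j

/-- `‖log p‖_∞`. -/
def logSup {k : ℕ} (p : Fin k → ℝ) : ℝ := ⨆ i, |Real.log (p i)|

/-- The rounding ("projection") procedure of Altschuler et al. (Algorithm 3). -/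
def roundPlan {m n : ℕ} (p : Fin m → ℝ) (q : Fin n → ℝ) (π : Matrix (Fin m) (Fin n) ℝ) :
    Matrix (Fin m) (Fin n) ℝ :=
  let π' : Matrix (Fin m) (Fin n) ℝ := fun i j => min 1 (p i / rowSum π i) * π i j
  let π'' : Matrix (Fin m) (Fin n) ℝ := fun i j => π' i j * min 1 (q j / colSum π' j)
  fun i j => π'' i j +
    (p i - rowSum π'' i) * (q j - colSum π'' j) / l1vec (fun i' => p i' - rowSum π'' i')

/-- Relaxed entropic objective `F^reg(π) = ⟨c,π⟩ + α⁻¹ KL(π𝟙|p) + β⁻¹ KL(π|π^ref)`. -/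
def Freg {m n : ℕ} (c : Matrix (Fin m) (Fin n) ℝ) (p : Fin m → ℝ) (α β : ℝ)
    (π : Matrix (Fin m) (Fin n) ℝ) : ℝ :=
  frob c π + α⁻¹ * KLvec (rowSum π) p + β⁻¹ * KLmat π (piRef m n)

/-- Dual functional for the relaxed entropic problem. -/
def dualFun {m n : ℕ} (p : Fin m → ℝ) (q : Fin n → ℝ) (c : Matrix (Fin m) (Fin n) ℝ)
    (α β : ℝ) (u : Fin m → ℝ) (v : Fin n → ℝ) : ℝ :=
  α⁻¹ * (∑ i, (1 - Real.exp (-(α * u i))) * p i) + ∑ j, v j * q j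
    - β⁻¹ * (∑ i, ∑ j, Real.exp (β * (u i + v j - c i j)) * piRef m n i j) + β⁻¹

/-- Dual functional of entropic OT. -/
def eotDual {m n : ℕ} (p : Fin m → ℝ) (q : Fin n → ℝ) (c : Matrix (Fin m) (Fin n) ℝ)
    (β : ℝ) (u : Fin m → ℝ) (v : Fin n → ℝ) : ℝ :=
  ∑ i, p i * u i + ∑ j, q j * v j
    + β⁻¹ * (1 - ∑ i, ∑ j, piRef m n i j * Real.exp (β * (u i + v j - c i j)))

/-- The set `C_β` of plans of the form `diag(a) e^{-βc} diag(b)` with `a, b ≥ 0`. -/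
def scalingSet {m n : ℕ} (c : Matrix (Fin m) (Fin n) ℝ) (β : ℝ) :
    Set (Matrix (Fin m) (Fin n) ℝ) :=
  {π | ∃ a : Fin m → ℝ, ∃ b : Fin n → ℝ, (∀ i, 0 ≤ a i) ∧ (∀ j, 0 ≤ b j) ∧
    π = fun i j => a i * Real.exp (-(β * c i j)) * b j}

/-! Moving a little mass `t` from row `i` to row `k` inside column `j` keeps a plan in `Γ(*, q)`. By
convexity, the resulting change of `F^reg` is at most `t` times the difference of the partial
derivatives at the *perturbed* plan, where both are finite. Minimality and `t → 0` therefore give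
`e^{β c_ij} (r_i / p_i)^{β/α} π_ij ≤ e^{β c_kj} (r_k / p_k)^{β/α} π_kj`, with `r = π𝟙`,
without first showing that the minimizer has positive entries. Summing over `j` gives
`(1 + β/α) (log (r_i / p_i) - log (r_k / p_k)) ≤ β ‖c‖_osc + 2 ‖log p‖_∞`. Since `r` and `p` have
the same mass, the log-ratios cannot all have the same strict sign, so each is bounded by the
largest difference of two of them, and `|r_i - p_i| ≤ (r_i + p_i) / 2 * |log (r_i / p_i)|` turns
this into an `ℓ¹` bound. -/

section LogRatio

lemma abs_sub_le_add_div_two_mul_abs_log_div {a b : ℝ} (ha : 0 < a) (hb : 0 < b) :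
    |a - b| ≤ (a + b) / 2 * |Real.log (a / b)| := by
  wlog hba : b ≤ a generalizing a b
  · rw [abs_sub_comm, add_comm a, ← inv_div b, Real.log_inv, abs_neg]
    exact this hb ha (le_of_not_ge hba)
  have hx : 0 ≤ a / b - 1 := sub_nonneg.2 ((one_le_div hb).2 hba)
  have hlog : 2 * (a - b) / (a + b) ≤ Real.log (a / b) := by
    have hle := Real.le_log_one_add_of_nonneg hx
    rw [add_sub_cancel] at hle
    convert hle using 1
    have hden : a / b - 1 + 2 = (a + b) / b := by
      field_simp
      ring
    rw [hden]
    field_simp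
  rw [abs_of_nonneg (sub_nonneg.2 hba), abs_of_nonneg (Real.log_nonneg ((one_le_div hb).2 hba))]
  calc a - b = (a + b) / 2 * (2 * (a - b) / (a + b)) := by field_simp
    _ ≤ (a + b) / 2 * Real.log (a / b) := by gcongr

variable {ι : Type*} [Fintype ι] {r p : ι → ℝ} {D : ℝ}

lemma abs_log_div_le_of_sum_eq (hr : ∀ i, 0 < r i) (hp : ∀ i, 0 < p i)
    (hsum : ∑ i, r i = ∑ i, p i)
    (hD : ∀ i k, Real.log (r i / p i) - Real.log (r k / p k) ≤ D) (i : ι) :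
    |Real.log (r i / p i)| ≤ D := by
  have huniv : (univ : Finset ι).Nonempty := ⟨i, mem_univ i⟩
  obtain ⟨l, -, hl⟩ := exists_le_of_sum_le huniv hsum.le
  obtain ⟨u, -, hu⟩ := exists_le_of_sum_le huniv hsum.ge
  have hlog_l : Real.log (r l / p l) ≤ 0 :=
    Real.log_nonpos (div_pos (hr l) (hp l)).le ((div_le_one (hp l)).2 hl)
  have hlog_u : 0 ≤ Real.log (r u / p u) := Real.log_nonneg ((one_le_div (hp u)).2 hu)
  exact abs_le.2 ⟨by linarith [hD u i], by linarith [hD i l]⟩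

lemma sum_abs_sub_le_of_log_div_sub_le (hr : ∀ i, 0 < r i) (hp : ∀ i, 0 < p i)
    (hsum : ∑ i, r i = ∑ i, p i)
    (hD : ∀ i k, Real.log (r i / p i) - Real.log (r k / p k) ≤ D) :
    ∑ i, |r i - p i| ≤ (∑ i, p i) * D := by
  calc ∑ i, |r i - p i| ≤ ∑ i, (r i + p i) / 2 * D := by
        refine sum_le_sum fun i _ ↦
          (abs_sub_le_add_div_two_mul_abs_log_div (hr i) (hp i)).trans ?_
        exact mul_le_mul_of_nonneg_left (abs_log_div_le_of_sum_eq hr hp hsum hD i)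
          (half_pos (add_pos (hr i) (hp i))).le
    _ = (∑ i, p i) * D := by
        rw [← sum_mul, ← sum_div, sum_add_distrib, hsum, add_self_div_two]

end LogRatio

section KullbackLeibler

lemma KLsummand_sub_KLsummand_le {x y b : ℝ} (hx : 0 ≤ x) (hy : 0 ≤ y) (hxy : y = 0 → x = 0)
    (hb : b ≠ 0) :
    (y * Real.log (y / b) - y + b) - (x * Real.log (x / b) - x + b) ≤
      (y - x) * Real.log (y / b) := by
  rcases hx.eq_or_lt with rfl | hx
  · simpa using hy
  have hy : 0 < y := hy.lt_of_ne' fun h ↦ hx.ne' (hxy h)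
  have hlog : x * (Real.log y - Real.log x) ≤ y - x := by
    rw [← Real.log_div hy.ne' hx.ne']
    calc x * Real.log (y / x) ≤ x * (y / x - 1) := by
          gcongr
          exact Real.log_le_sub_one_of_pos (div_pos hy hx)
      _ = y - x := by field_simp
  rw [Real.log_div hy.ne' hb, Real.log_div hx.ne' hb]
  linarith

lemma KLvec_sub_KLvec_le {k : ℕ} {a a' b : Fin k → ℝ} (ha : ∀ i, 0 ≤ a i) (ha' : ∀ i, 0 ≤ a' i)
    (hac : ∀ i, a' i = 0 → a i = 0) (hb : ∀ i, b i ≠ 0) :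
    KLvec a' b - KLvec a b ≤ ∑ i, (a' i - a i) * Real.log (a' i / b i) := by
  rw [KLvec, KLvec, ← sum_sub_distrib]
  exact sum_le_sum fun i _ ↦ KLsummand_sub_KLsummand_le (ha i) (ha' i) (hac i) (hb i)

lemma KLmat_sub_KLmat_le {m n : ℕ} {π π' ρ : Matrix (Fin m) (Fin n) ℝ} (hπ : ∀ i j, 0 ≤ π i j)
    (hπ' : ∀ i j, 0 ≤ π' i j) (hac : ∀ i j, π' i j = 0 → π i j = 0) (hρ : ∀ i j, ρ i j ≠ 0) :
    KLmat π' ρ - KLmat π ρ ≤ ∑ i, ∑ j, (π' i j - π i j) * Real.log (π' i j / ρ i j) := by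
  rw [KLmat, KLmat, ← sum_sub_distrib]
  exact sum_le_sum fun i _ ↦ KLvec_sub_KLvec_le (hπ i) (hπ' i) (hac i) (hρ i)

end KullbackLeibler

section Norms

lemma abs_log_le_logSup {k : ℕ} (p : Fin k → ℝ) (i : Fin k) : |Real.log (p i)| ≤ logSup p :=
  le_ciSup (f := fun i ↦ |Real.log (p i)|) (Set.finite_range _).bddAbove i

lemma logSup_nonneg {k : ℕ} (p : Fin k → ℝ) : 0 ≤ logSup p :=
  Real.iSup_nonneg fun _ ↦ abs_nonneg _

variable {m n : ℕ} (c : Matrix (Fin m) (Fin n) ℝ)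

lemma sub_le_cOsc (i k : Fin m) (j l : Fin n) : c i j - c k l ≤ cOsc c :=
  sub_le_sub
    ((le_ciSup (Set.finite_range (c i)).bddAbove j).trans
      (le_ciSup (Set.finite_range fun i ↦ ⨆ j, c i j).bddAbove i))
    ((ciInf_le (Set.finite_range fun i ↦ ⨅ j, c i j).bddBelow k).trans
      (ciInf_le (Set.finite_range (c k)).bddBelow l))

lemma cOsc_nonneg : 0 ≤ cOsc c := by
  rcases isEmpty_or_nonempty (Fin m) with _ | ⟨⟨i⟩⟩
  · simp [cOsc]
  rcases isEmpty_or_nonempty (Fin n) with _ | ⟨⟨j⟩⟩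
  · simp [cOsc]
  simpa using sub_le_cOsc c i i j j

end Norms

section Plans

variable {m n : ℕ}

lemma piRef_pos (i : Fin m) (j : Fin n) : 0 < piRef m n i j := by
  have hm : 0 < m := i.pos
  have hn : 0 < n := j.pos
  unfold piRef
  positivity

lemma sum_rowSum_eq_sum_colSum (π : Matrix (Fin m) (Fin n) ℝ) :
    ∑ i, rowSum π i = ∑ j, colSum π j :=
  sum_comm

variable {π : Matrix (Fin m) (Fin n) ℝ}

lemma rowSum_nonneg (hπ : ∀ i j, 0 ≤ π i j) (i : Fin m) : 0 ≤ rowSum π i :=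
  sum_nonneg fun j _ ↦ hπ i j

lemma rowSum_pos (hπ : ∀ i j, 0 ≤ π i j) {i : Fin m} {j : Fin n} (hij : 0 < π i j) :
    0 < rowSum π i :=
  sum_pos' (fun j _ ↦ hπ i j) ⟨j, mem_univ j, hij⟩

/-- The plan obtained from `π` by moving mass `t` from row `i` to row `k` inside column `j`. -/
def shiftMass (π : Matrix (Fin m) (Fin n) ℝ) (i k : Fin m) (j : Fin n) (t : ℝ) :
    Matrix (Fin m) (Fin n) ℝ :=
  π + (Matrix.single k j t - Matrix.single i j t)

variable {i k : Fin m} {j : Fin n} {t : ℝ}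

lemma shiftMass_zero : shiftMass π i k j 0 = π := by
  simp [shiftMass]

lemma shiftMass_apply_source (hik : i ≠ k) : shiftMass π i k j t i j = π i j - t := by
  simp [shiftMass, hik.symm, sub_eq_add_neg]

lemma shiftMass_apply_target (hik : i ≠ k) : shiftMass π i k j t k j = π k j + t := by
  simp [shiftMass, hik]

lemma le_shiftMass_apply {a : Fin m} {b : Fin n} (ht : 0 ≤ t) (hab : ¬(i = a ∧ j = b)) :
    π a b ≤ shiftMass π i k j t a b := by
  have hsingle : 0 ≤ Matrix.single k j t a b := by
    rw [Matrix.single_apply]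
    split_ifs <;> simp [ht]
  simpa [shiftMass, Matrix.single_apply_of_ne (h := hab)] using hsingle

lemma continuous_shiftMass_apply (a : Fin m) (b : Fin n) :
    Continuous fun t ↦ shiftMass π i k j t a b := by
  simp only [shiftMass, Matrix.add_apply, Matrix.sub_apply, Matrix.single_apply]
  split_ifs <;> fun_prop

lemma colSum_shiftMass : colSum (shiftMass π i k j t) = colSum π := by
  ext b
  simp [colSum, shiftMass, sum_add_distrib, Matrix.single_apply, ite_and]

lemma sum_shiftMass_sub_mul (G : Matrix (Fin m) (Fin n) ℝ) :
    ∑ a, ∑ b, (shiftMass π i k j t a b - π a b) * G a b = t * (G k j - G i j) := by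
  simp [shiftMass, Matrix.single_apply, sub_mul, mul_sub, ite_and]

lemma shiftMass_nonneg (hπ : ∀ a b, 0 ≤ π a b) (hik : i ≠ k) (ht : 0 ≤ t) (htπ : t ≤ π i j)
    (a : Fin m) (b : Fin n) : 0 ≤ shiftMass π i k j t a b := by
  by_cases hab : i = a ∧ j = b
  · obtain ⟨rfl, rfl⟩ := hab
    simpa [shiftMass_apply_source hik] using htπ
  · exact (hπ a b).trans (le_shiftMass_apply ht hab)

lemma eq_zero_of_shiftMass_eq_zero (hπ : ∀ a b, 0 ≤ π a b) (hik : i ≠ k) (ht : 0 ≤ t)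
    (htπ : t < π i j) (a : Fin m) (b : Fin n) (h0 : shiftMass π i k j t a b = 0) : π a b = 0 := by
  by_cases hab : i = a ∧ j = b
  · obtain ⟨rfl, rfl⟩ := hab
    rw [shiftMass_apply_source hik] at h0
    linarith
  · exact le_antisymm (h0 ▸ le_shiftMass_apply ht hab) (hπ a b)

end Plans

section Gradient

variable {m n : ℕ}

/-- The gradient of `Freg c p α β` at a plan `π` with positive entries. -/
def gradFreg (c : Matrix (Fin m) (Fin n) ℝ) (p : Fin m → ℝ) (α β : ℝ)
    (π : Matrix (Fin m) (Fin n) ℝ) : Matrix (Fin m) (Fin n) ℝ :=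
  fun i j ↦ c i j + α⁻¹ * Real.log (rowSum π i / p i) + β⁻¹ * Real.log (π i j / piRef m n i j)

/-- The entrywise exponential of `β • gradFreg c p α β π`, extended by continuity to plans with zero
entries, where the gradient itself is `-∞`. -/
def expGradFreg (c : Matrix (Fin m) (Fin n) ℝ) (p : Fin m → ℝ) (α β : ℝ)
    (π : Matrix (Fin m) (Fin n) ℝ) : Matrix (Fin m) (Fin n) ℝ :=
  fun i j ↦ Real.exp (β * c i j) * (rowSum π i / p i) ^ (β / α) * (π i j / piRef m n i j)

variable {c : Matrix (Fin m) (Fin n) ℝ} {p : Fin m → ℝ} {α β : ℝ}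
  {π π' : Matrix (Fin m) (Fin n) ℝ}

lemma Freg_sub_Freg_le (hp : ∀ i, p i ≠ 0) (hα : 0 ≤ α) (hβ : 0 ≤ β) (hπ : ∀ i j, 0 ≤ π i j)
    (hπ' : ∀ i j, 0 ≤ π' i j) (hac : ∀ i j, π' i j = 0 → π i j = 0) :
    Freg c p α β π' - Freg c p α β π ≤
      ∑ i, ∑ j, (π' i j - π i j) * gradFreg c p α β π' i j := by
  have hac_row (i : Fin m) (h0 : rowSum π' i = 0) : rowSum π i = 0 :=
    sum_eq_zero fun j hj ↦ hac i j ((sum_eq_zero_iff_of_nonneg fun j _ ↦ hπ' i j).1 h0 j hj)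
  have hrow := KLvec_sub_KLvec_le (rowSum_nonneg hπ) (rowSum_nonneg hπ') hac_row hp
  have hmat := KLmat_sub_KLmat_le hπ hπ' hac fun i j ↦ (piRef_pos i j).ne'
  calc Freg c p α β π' - Freg c p α β π
      = (frob c π' - frob c π) + α⁻¹ * (KLvec (rowSum π') p - KLvec (rowSum π) p)
          + β⁻¹ * (KLmat π' (piRef m n) - KLmat π (piRef m n)) := by
        simp only [Freg]
        ring
    _ ≤ (frob c π' - frob c π)
          + α⁻¹ * ∑ i, (rowSum π' i - rowSum π i) * Real.log (rowSum π' i / p i)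
          + β⁻¹ * ∑ i, ∑ j, (π' i j - π i j) * Real.log (π' i j / piRef m n i j) := by
        gcongr
    _ = ∑ i, ∑ j, (π' i j - π i j) * gradFreg c p α β π' i j := by
        simp only [frob, rowSum, gradFreg, ← sum_sub_distrib, mul_sum, sum_mul, ← sum_add_distrib]
        exact sum_congr rfl fun i _ ↦ sum_congr rfl fun j _ ↦ by ring

lemma exp_mul_gradFreg (hβ : β ≠ 0) {i : Fin m} {j : Fin n} (hp : 0 < p i)
    (hπ : ∀ i j, 0 ≤ π i j) (hij : 0 < π i j) :
    Real.exp (β * gradFreg c p α β π i j) = expGradFreg c p α β π i j := by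
  have hrow : 0 < rowSum π i / p i := div_pos (rowSum_pos hπ hij) hp
  have hent : 0 < π i j / piRef m n i j := div_pos hij (piRef_pos i j)
  have hβgrad : β * gradFreg c p α β π i j = β * c i j
      + Real.log (rowSum π i / p i) * (β / α) + Real.log (π i j / piRef m n i j) := by
    simp only [gradFreg]
    field_simp
  rw [hβgrad, Real.exp_add, Real.exp_add, Real.exp_log hent, ← Real.rpow_def_of_pos hrow,
    expGradFreg]

lemma expGradFreg_nonneg (hp : ∀ i, 0 ≤ p i) (hπ : ∀ i j, 0 ≤ π i j) (i : Fin m) (j : Fin n) :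
    0 ≤ expGradFreg c p α β π i j := by
  have hrow := rowSum_nonneg hπ i
  have hpi := hp i
  have hij := hπ i j
  have href := piRef_pos i j
  unfold expGradFreg
  positivity

lemma tendsto_expGradFreg_shiftMass (hβα : 0 ≤ β / α) (i k : Fin m) (j : Fin n) (a : Fin m)
    (b : Fin n) :
    Tendsto (fun t ↦ expGradFreg c p α β (shiftMass π i k j t) a b) (𝓝[>] 0)
      (𝓝 (expGradFreg c p α β π a b)) := by
  have hrow : Continuous fun t ↦ rowSum (shiftMass π i k j t) a :=
    continuous_finsetSum _ fun b _ ↦ continuous_shiftMass_apply a b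
  have hcont : Continuous fun t ↦ expGradFreg c p α β (shiftMass π i k j t) a b :=
    (continuous_const.mul ((hrow.div_const _).rpow_const fun _ ↦ Or.inr hβα)).mul
      ((continuous_shiftMass_apply a b).div_const _)
  simpa only [shiftMass_zero] using (hcont.tendsto 0).mono_left nhdsWithin_le_nhds

end Gradient

section Minimizer

variable {m n : ℕ} {c : Matrix (Fin m) (Fin n) ℝ} {p : Fin m → ℝ} {q : Fin n → ℝ} {α β : ℝ}
  {π : Matrix (Fin m) (Fin n) ℝ}

lemma gradFreg_shiftMass_le_of_isMinOn (hp : ∀ i, p i ≠ 0) (hα : 0 ≤ α) (hβ : 0 ≤ β)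
    (hπ : π ∈ GammaStar q) (hmin : IsMinOn (Freg c p α β) (GammaStar q) π) {i k : Fin m}
    (hik : i ≠ k) {j : Fin n} {t : ℝ} (ht : 0 < t) (htπ : t < π i j) :
    gradFreg c p α β (shiftMass π i k j t) i j ≤ gradFreg c p α β (shiftMass π i k j t) k j := by
  have hnonneg := shiftMass_nonneg hπ.1 hik ht.le htπ.le
  have hFreg := Freg_sub_Freg_le (c := c) hp hα hβ hπ.1 hnonneg
    (eq_zero_of_shiftMass_eq_zero hπ.1 hik ht.le htπ)
  rw [sum_shiftMass_sub_mul] at hFreg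
  have hle := isMinOn_iff.1 hmin _ ⟨hnonneg, colSum_shiftMass.trans hπ.2⟩
  exact sub_nonneg.1 (nonneg_of_mul_nonneg_right ((sub_nonneg.2 hle).trans hFreg) ht)

lemma expGradFreg_le_of_isMinOn (hp : ∀ i, 0 < p i) (hα : 0 ≤ α) (hβ : 0 < β)
    (hπ : π ∈ GammaStar q) (hmin : IsMinOn (Freg c p α β) (GammaStar q) π) (i k : Fin m)
    (j : Fin n) : expGradFreg c p α β π i j ≤ expGradFreg c p α β π k j := by
  rcases eq_or_ne i k with rfl | hik
  · rfl
  rcases (hπ.1 i j).eq_or_lt with hij | hij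
  · simpa [expGradFreg, ← hij] using expGradFreg_nonneg (c := c) (fun i ↦ (hp i).le) hπ.1 k j
  have hβα : 0 ≤ β / α := div_nonneg hβ.le hα
  refine le_of_tendsto_of_tendsto (tendsto_expGradFreg_shiftMass hβα i k j i j)
    (tendsto_expGradFreg_shiftMass hβα i k j k j) ?_
  filter_upwards [Ioo_mem_nhdsGT hij] with t ⟨ht, htπ⟩
  have hnonneg := shiftMass_nonneg hπ.1 hik ht.le htπ.le
  have hsource : 0 < shiftMass π i k j t i j := by
    rw [shiftMass_apply_source hik]
    exact sub_pos.2 htπ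
  have htarget : 0 < shiftMass π i k j t k j := by
    rw [shiftMass_apply_target hik]
    exact add_pos_of_nonneg_of_pos (hπ.1 k j) ht
  rw [← exp_mul_gradFreg hβ.ne' (hp i) hnonneg hsource,
    ← exp_mul_gradFreg hβ.ne' (hp k) hnonneg htarget]
  gcongr
  exact gradFreg_shiftMass_le_of_isMinOn (fun i ↦ (hp i).ne') hα hβ.le hπ hmin hik ht htπ

lemma mul_rpow_le_of_isMinOn (hp : ∀ i, 0 < p i) (hα : 0 ≤ α) (hβ : 0 < β)
    (hπ : π ∈ GammaStar q) (hmin : IsMinOn (Freg c p α β) (GammaStar q) π) (i k : Fin m)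
    (j : Fin n) :
    π i j * (rowSum π i / p i) ^ (β / α) ≤
      Real.exp (β * cOsc c) * (π k j * (rowSum π k / p k) ^ (β / α)) := by
  have hgrad := expGradFreg_le_of_isMinOn hp hα hβ hπ hmin i k j
  have hnonneg : 0 ≤ expGradFreg c p α β π i j := expGradFreg_nonneg (fun i ↦ (hp i).le) hπ.1 i j
  have href := piRef_pos i j
  have hentry (l : Fin m) : π l j * (rowSum π l / p l) ^ (β / α) =
      piRef m n l j * Real.exp (-(β * c l j)) * expGradFreg c p α β π l j := by
    have href := (piRef_pos l j).ne'
    rw [expGradFreg, Real.exp_neg]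
    field_simp
  have hexp : Real.exp (-(β * c i j)) ≤ Real.exp (β * cOsc c) * Real.exp (-(β * c k j)) := by
    rw [← Real.exp_add, Real.exp_le_exp]
    have hosc := mul_le_mul_of_nonneg_left (sub_le_cOsc c k i j j) hβ.le
    linarith
  rw [hentry, hentry]
  calc piRef m n i j * Real.exp (-(β * c i j)) * expGradFreg c p α β π i j
      ≤ piRef m n i j * (Real.exp (β * cOsc c) * Real.exp (-(β * c k j)))
          * expGradFreg c p α β π k j := by gcongr
    _ = Real.exp (β * cOsc c) *
          (piRef m n k j * Real.exp (-(β * c k j)) * expGradFreg c p α β π k j) := by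
        simp only [piRef]
        ring

lemma rowSum_mul_rpow_le_of_isMinOn (hp : ∀ i, 0 < p i) (hα : 0 ≤ α) (hβ : 0 < β)
    (hπ : π ∈ GammaStar q) (hmin : IsMinOn (Freg c p α β) (GammaStar q) π) (i k : Fin m) :
    rowSum π i * (rowSum π i / p i) ^ (β / α) ≤
      Real.exp (β * cOsc c) * (rowSum π k * (rowSum π k / p k) ^ (β / α)) :=
  calc rowSum π i * (rowSum π i / p i) ^ (β / α)
      = ∑ j, π i j * (rowSum π i / p i) ^ (β / α) := sum_mul ..
    _ ≤ ∑ j, Real.exp (β * cOsc c) * (π k j * (rowSum π k / p k) ^ (β / α)) :=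
        sum_le_sum fun j _ ↦ mul_rpow_le_of_isMinOn hp hα hβ hπ hmin i k j
    _ = Real.exp (β * cOsc c) * (rowSum π k * (rowSum π k / p k) ^ (β / α)) := by
        rw [← mul_sum, ← sum_mul, ← rowSum]

lemma rowSum_pos_of_isMinOn (hp : ∀ i, 0 < p i) (hα : 0 ≤ α) (hβ : 0 < β)
    (hπ : π ∈ GammaStar q) (hmin : IsMinOn (Freg c p α β) (GammaStar q) π)
    (hq : 0 < ∑ j, q j) (k : Fin m) : 0 < rowSum π k := by
  have hmass : 0 < ∑ i, rowSum π i := by rwa [sum_rowSum_eq_sum_colSum, hπ.2]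
  obtain ⟨i, -, hi⟩ := exists_lt_of_sum_lt (s := univ) (f := fun _ ↦ (0 : ℝ)) (by simpa using hmass)
  have hle := rowSum_mul_rpow_le_of_isMinOn hp hα hβ hπ hmin i k
  refine (rowSum_nonneg hπ.1 k).lt_of_ne' fun hk ↦ hle.not_gt ?_
  rw [hk, zero_mul, mul_zero]
  exact mul_pos hi (Real.rpow_pos_of_pos (div_pos hi (hp i)) _)

lemma log_rowSum_div_sub_le_of_isMinOn (hp : ∀ i, 0 < p i) (hα : 0 < α) (hβ : 0 < β)
    (hπ : π ∈ GammaStar q) (hmin : IsMinOn (Freg c p α β) (GammaStar q) π)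
    (hr : ∀ i, 0 < rowSum π i) (i k : Fin m) :
    Real.log (rowSum π i / p i) - Real.log (rowSum π k / p k) ≤
      α * β / (α + β) * (2 * logSup p / β + cOsc c) := by
  have hlog (l : Fin m) : Real.log (rowSum π l * (rowSum π l / p l) ^ (β / α)) =
      (1 + β / α) * Real.log (rowSum π l / p l) + Real.log (p l) := by
    rw [Real.log_mul (hr l).ne' (Real.rpow_pos_of_pos (div_pos (hr l) (hp l)) _).ne',
      Real.log_rpow (div_pos (hr l) (hp l)), Real.log_div (hr l).ne' (hp l).ne']
    ring
  have hpow (l : Fin m) : 0 < rowSum π l * (rowSum π l / p l) ^ (β / α) :=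
    mul_pos (hr l) (Real.rpow_pos_of_pos (div_pos (hr l) (hp l)) _)
  have hle := Real.log_le_log (hpow i)
    (rowSum_mul_rpow_le_of_isMinOn hp hα.le hβ hπ hmin i k)
  rw [Real.log_mul (Real.exp_ne_zero _) (hpow k).ne', Real.log_exp, hlog, hlog] at hle
  have hpi := neg_le_of_abs_le (abs_log_le_logSup p i)
  have hpk := le_of_abs_le (abs_log_le_logSup p k)
  calc Real.log (rowSum π i / p i) - Real.log (rowSum π k / p k)
      ≤ (2 * logSup p + β * cOsc c) / (1 + β / α) := by
        rw [le_div_iff₀ (by positivity)]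
        linarith
    _ = α * β / (α + β) * (2 * logSup p / β + cOsc c) := by field_simp

end Minimizer

theorem regularization_path_marginal_error_general
    {m n : ℕ} (p : Fin m → ℝ) (q : Fin n → ℝ) (c : Matrix (Fin m) (Fin n) ℝ)
    (hp : p ∈ simplexPos m) (hq : ∑ j, q j = 1)
    (α β : ℝ) (hα : 0 < α) (hβ : 0 < β)
    (πreg : Matrix (Fin m) (Fin n) ℝ)
    (hπregmem : πreg ∈ GammaStar q)
    (hπregopt : ∀ π' ∈ GammaStar (m := m) q, Freg c p α β πreg ≤ Freg c p α β π') :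
    l1vec (fun i => rowSum πreg i - p i) ≤
      (α * β / (α + β)) * (2 * logSup p / β + cOsc c) := by
  have hmin : IsMinOn (Freg c p α β) (GammaStar q) πreg := isMinOn_iff.2 hπregopt
  have hmass : ∑ i, rowSum πreg i = ∑ i, p i := by
    rw [sum_rowSum_eq_sum_colSum, hπregmem.2, hq, hp.2]
  have hpos := rowSum_pos_of_isMinOn hp.1 hα.le hβ hπregmem hmin (hq ▸ one_pos)
  have hlog := log_rowSum_div_sub_le_of_isMinOn hp.1 hα hβ hπregmem hmin hpos
  simpa only [l1vec, hp.2, one_mul] using sum_abs_sub_le_of_log_div_sub_le hpos hp.1 hmass hlog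

/-- Lemma 4: marginal error of the regularization path.
`‖π^reg𝟙 - p‖₁ ≤ (2αβ/(α+β))(4‖log p‖_∞/β + ‖c‖_osc)`. -/
theorem regularization_path_marginal_error
    {m n : ℕ} (p : Fin m → ℝ) (q : Fin n → ℝ) (c : Matrix (Fin m) (Fin n) ℝ)
    (hp : p ∈ simplexPos m) (hq : q ∈ simplexPos n)
    (α β : ℝ) (hα : 0 < α) (hβ : 0 < β)
    (πreg : Matrix (Fin m) (Fin n) ℝ)
    (hπregmem : πreg ∈ GammaStar q)
    (hπregopt : ∀ π' ∈ GammaStar (m := m) q, Freg c p α β πreg ≤ Freg c p α β π') :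
    l1vec (fun i => rowSum πreg i - p i) ≤
      (2 * α * β / (α + β)) * (4 * logSup p / β + cOsc c) := by
  have hL := logSup_nonneg p
  have hO := cOsc_nonneg c
  refine (regularization_path_marginal_error_general p q c hp hq.2 α β hα hβ πreg hπregmem
    hπregopt).trans ?_
  gcongr <;> linarith

end
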